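/- A Newman polynomial of degree 9 divides no Littlewood polynomial if and only if it is one of the following 9 polynomials or one of their reciprocals: X^9 + X^6 + X^2 + X + 1; X^9 + X^7 + X^6 + X^2 + 1; X^9 + X^7 + X^6 + X^4 + 1; X^9 + X^8 + X^6 + X^5 + X^2 + 1; X^9 + X^8 + X^7 + X^5 + X^3 + 1; X^9 + X^8 + X^7 + X^5 + X^2 + X + 1; X^9 + X^8 + X^5 + X^3 + X^2 + X + 1; X^9 + X^7 + X^6 + X^3 + X^2 + X + 1; X^9 + X^8 + X^5 + X^4 + X^3 + X^2 + 1. In particular, there are exactly 18 Newman polynomials of degree 9 with no Littlewood multiple. -/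

import Mathlib

open Polynomial

/-- A Littlewood polynomial: all coefficients of X^0,...,X^(deg) lie in {-1,1}. -/
def IsLittlewood (L : Polynomial ℤ) : Prop :=
  ∀ i ≤ L.natDegree, L.coeff i ∈ ({-1, 1} : Set ℤ)

/-- A Newman polynomial: all coefficients in {0,1} and constant term 1. -/
def IsNewman (P : Polynomial ℤ) : Prop :=
  (∀ i, P.coeff i ∈ ({0, 1} : Set ℤ)) ∧ P.coeff 0 = 1

/-- The nine listed degree-9 Newman polynomials with no Littlewood multiple
(reciprocals omitted). -/
noncomputable def badNewman9 : List (Polynomial ℤ) :=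
  [X ^ 9 + X ^ 6 + X ^ 2 + X + 1,
   X ^ 9 + X ^ 7 + X ^ 6 + X ^ 2 + 1,
   X ^ 9 + X ^ 7 + X ^ 6 + X ^ 4 + 1,
   X ^ 9 + X ^ 8 + X ^ 6 + X ^ 5 + X ^ 2 + 1,
   X ^ 9 + X ^ 8 + X ^ 7 + X ^ 5 + X ^ 3 + 1,
   X ^ 9 + X ^ 8 + X ^ 7 + X ^ 5 + X ^ 2 + X + 1,
   X ^ 9 + X ^ 8 + X ^ 5 + X ^ 3 + X ^ 2 + X + 1,
   X ^ 9 + X ^ 7 + X ^ 6 + X ^ 3 + X ^ 2 + X + 1,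
   X ^ 9 + X ^ 8 + X ^ 5 + X ^ 4 + X ^ 3 + X ^ 2 + 1]

/-!
Let `L = P * Q` be a Littlewood multiple of a polynomial `P` with constant term `1`. Its degree may
be taken arbitrarily large, since `(1 + X ^ (deg L + 1)) * L` is a Littlewood polynomial as well.
Divide `L` by `P` in increasing powers of `X`: there are only two choices, `1` and `-1`, for the
next coefficient of `L`, and the state of the division after reading it determines what the next
coefficients of `Q` would be if `L` continued with zeros. If `P` has no zeros on the unit circle,
these coefficients are bounded independently of `L`: by Graeffe's iteration, `P` has a multiple in
which one coefficient exceeds the sum of the absolute values of the others. So only finitely many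
states are possible, and when the search through them dies out, `P` has no Littlewood multiple. This
happens for the exceptional polynomials; the other ones have explicit Littlewood multiples.
Reversing `P` and `L` shows that it suffices to consider one of `P` and its reciprocal.
-/

section CoefficientLists

/-- The polynomial with the given list of coefficients, constant term first. -/
noncomputable def ofCoeffs : List ℤ → ℤ[X]
  | [] => 0
  | a :: l => C a + X * ofCoeffs l

theorem coeff_ofCoeffs (l : List ℤ) (i : ℕ) : (ofCoeffs l).coeff i = l.getD i 0 := by
  induction l generalizing i with
  | nil => simp [ofCoeffs]
  | cons a l ih =>
    cases i with
    | zero => simp [ofCoeffs]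
    | succ i => rw [ofCoeffs, coeff_add, coeff_C_succ, coeff_X_mul, ih]; simp

theorem ofCoeffs_append (l r : List ℤ) :
    ofCoeffs (l ++ r) = ofCoeffs l + X ^ l.length * ofCoeffs r := by
  induction l with
  | nil => simp [ofCoeffs]
  | cons a l ih => simp only [List.cons_append, ofCoeffs, ih, List.length_cons, pow_succ]; ring

theorem ofCoeffs_eq_monomial_add_set (l : List ℤ) (d : ℕ) :
    ofCoeffs l = C (l.getD d 0) * X ^ d + ofCoeffs (l.set d 0) := by
  ext i
  simp only [coeff_add, coeff_C_mul_X_pow, coeff_ofCoeffs, List.getD_eq_getElem?_getD,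
    List.getElem?_set]
  grind

/-- `f a`, arranged so that the kernel evaluates `a` to a literal before substituting it. -/
def natStrict {α : Sort*} (f : ℕ → α) : ℕ → α
  | 0 => f 0
  | a + 1 => f a.succ

@[simp]
theorem natStrict_apply {α : Sort*} (f : ℕ → α) (a : ℕ) : natStrict f a = f a := by
  cases a <;> rfl

/-- The analogue of `natStrict` for integers. -/
def intStrict {α : Sort*} (f : ℤ → α) : ℤ → α
  | .ofNat a => natStrict (fun a => f (.ofNat a)) a
  | .negSucc a => natStrict (fun a => f (.negSucc a)) a

@[simp]
theorem intStrict_apply {α : Sort*} (f : ℤ → α) (a : ℤ) : intStrict f a = f a := by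
  cases a <;> simp [intStrict]

/-- The coefficient list of `r + a • l`. -/
def addScaled (a : ℤ) : List ℤ → List ℤ → List ℤ
  | [], r => r
  | b :: l, [] => intStrict (fun c => c :: addScaled a l []) (a * b)
  | b :: l, d :: r => intStrict (fun c => c :: addScaled a l r) (d + a * b)

theorem ofCoeffs_addScaled (a : ℤ) (l r : List ℤ) :
    ofCoeffs (addScaled a l r) = ofCoeffs r + C a * ofCoeffs l := by
  induction l generalizing r with
  | nil => simp [addScaled, ofCoeffs]
  | cons b l ih => cases r <;> simp [addScaled, ofCoeffs, ih] <;> ring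

/-- The coefficient list of a product. -/
def mulCoeffs (l r : List ℤ) : List ℤ :=
  l.foldr (fun a t => addScaled a r (0 :: t)) []

theorem ofCoeffs_mulCoeffs (l r : List ℤ) :
    ofCoeffs (mulCoeffs l r) = ofCoeffs l * ofCoeffs r := by
  induction l with
  | nil => simp [mulCoeffs, ofCoeffs]
  | cons a l ih =>
    change ofCoeffs (addScaled a r (0 :: mulCoeffs l r)) = _
    rw [ofCoeffs_addScaled, ofCoeffs, ih, ofCoeffs, C_0]
    ring

/-- The sum of the absolute values of the coefficients. -/
def coeffNorm (l : List ℤ) : ℕ := (l.map Int.natAbs).sum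

theorem natAbs_coeff_expand_ofCoeffs_mul_le {G : ℤ[X]} {H : ℕ}
    (hG : ∀ i, (G.coeff i).natAbs ≤ H) (n : ℕ) (l : List ℤ) (i : ℕ) :
    ((expand ℤ n (ofCoeffs l) * G).coeff i).natAbs ≤ coeffNorm l * H := by
  induction l generalizing i with
  | nil => simp [ofCoeffs]
  | cons a l ih =>
    have h : expand ℤ n (ofCoeffs (a :: l)) * G =
        C a * G + X ^ n * (expand ℤ n (ofCoeffs l) * G) := by
      simp only [ofCoeffs, map_add, map_mul, expand_C, expand_X]
      ring
    have hshift : ((X ^ n * (expand ℤ n (ofCoeffs l) * G)).coeff i).natAbs ≤ coeffNorm l * H := by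
      rw [coeff_X_pow_mul']
      split
      exacts [ih _, by simp]
    rw [h, coeff_add, coeff_C_mul]
    calc _ ≤ a.natAbs * (G.coeff i).natAbs + _ := by
          rw [← Int.natAbs_mul]; exact Int.natAbs_add_le _ _
      _ ≤ a.natAbs * H + coeffNorm l * H := by gcongr; exact hG i
      _ = coeffNorm (a :: l) * H := by simp [coeffNorm, add_mul]

end CoefficientLists

section Graeffe

/-- Every second entry of a list, starting with the first one. -/
def evenPart : List ℤ → List ℤ
  | [] => []
  | [a] => [a]
  | a :: _ :: l => a :: evenPart l

/-- The coefficient list of `f (X ^ 2)`. -/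
def spread : List ℤ → List ℤ
  | [] => []
  | a :: l => a :: 0 :: spread l

theorem ofCoeffs_spread (l : List ℤ) : ofCoeffs (spread l) = expand ℤ 2 (ofCoeffs l) := by
  induction l with
  | nil => simp [spread, ofCoeffs]
  | cons a l ih => simp [spread, ofCoeffs, ih]; ring

theorem ofCoeffs_eq_even_add_odd : ∀ l : List ℤ, ofCoeffs l =
    expand ℤ 2 (ofCoeffs (evenPart l)) + X * expand ℤ 2 (ofCoeffs (evenPart l.tail))
  | [] => by simp [evenPart, ofCoeffs]
  | [a] => by simp [evenPart, ofCoeffs]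
  | [a, b] => by simp [evenPart, ofCoeffs]
  | a :: b :: c :: l => by
    rw [ofCoeffs, ofCoeffs, ofCoeffs_eq_even_add_odd (c :: l)]
    simp [evenPart, ofCoeffs]
    ring

/-- The Graeffe transform of `f`: the polynomial `g` with `g (X ^ 2) = f (X) f (-X)`. -/
def graeffe (l : List ℤ) : List ℤ :=
  addScaled (-1) (0 :: mulCoeffs (evenPart l.tail) (evenPart l.tail))
    (mulCoeffs (evenPart l) (evenPart l))

/-- The cofactor by which `f` has to be multiplied to give its `k`-th Graeffe transform evaluated
at `X ^ 2 ^ k`. -/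
def graeffeCofactor : ℕ → List ℤ → List ℤ
  | 0, _ => [1]
  | k + 1, l =>
    let t := graeffeCofactor k (graeffe l)
    addScaled (-1) (0 :: spread (mulCoeffs (evenPart l.tail) t))
      (spread (mulCoeffs (evenPart l) t))

theorem ofCoeffs_graeffeCofactor_mul (k : ℕ) (l : List ℤ) :
    ofCoeffs (graeffeCofactor k l) * ofCoeffs l =
      expand ℤ (2 ^ k) (ofCoeffs (graeffe^[k] l)) := by
  induction k generalizing l with
  | zero => simp [graeffeCofactor, ofCoeffs]
  | succ k ih =>
    rw [Function.iterate_succ_apply, pow_succ', ← expand_expand, ← ih, map_mul,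
      graeffeCofactor, graeffe]
    simp only [ofCoeffs_addScaled, ofCoeffs_spread, ofCoeffs_mulCoeffs, ofCoeffs, map_add, map_mul,
      map_neg, expand_X, map_zero, map_one]
    rw [ofCoeffs_eq_even_add_odd l]
    ring

end Graeffe

section LongDivision

variable {R : Type*} [CommRing R]

/-- One step of the division of `S` by `P`, where `P` has constant term `1`, in increasing powers of
`X`: subtract the multiple of `P` that kills the constant term of `S`, then divide by `X`. -/
noncomputable def divStep (P : R[X]) : Module.End R R[X] where
  toFun S := (S - C (S.coeff 0) * P).divX
  map_add' S T := by
    rw [← divX_add, coeff_add, C_add]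
    ring_nf
  map_smul' a S := by
    rw [RingHom.id_apply, smul_eq_C_mul, smul_eq_C_mul, ← divX_C_mul, coeff_C_mul, C_mul]
    ring_nf

theorem divStep_apply (P S : R[X]) : divStep P S = (S - C (S.coeff 0) * P).divX := rfl

variable {P : R[X]}

theorem eq_coeff_zero_mul_add_X_mul_divStep (hP : P.coeff 0 = 1) (S : R[X]) :
    S = C (S.coeff 0) * P + X * divStep P S := by
  have h := divX_mul_X_add (S - C (S.coeff 0) * P)
  rw [← divStep_apply, coeff_sub, coeff_C_mul, hP, mul_one, sub_self, C_0, add_zero] at h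
  linear_combination -h

theorem dvd_of_divStep_pow_eq_zero (hP : P.coeff 0 = 1) {S : R[X]} {n : ℕ}
    (h : (divStep P ^ n) S = 0) : P ∣ S := by
  induction n generalizing S with
  | zero => simp_all
  | succ n ih =>
    rw [pow_succ, Module.End.mul_apply] at h
    rw [eq_coeff_zero_mul_add_X_mul_divStep hP S]
    exact dvd_add (dvd_mul_left _ _) (dvd_mul_of_dvd_right (ih h) _)

theorem eq_mul_sum_add_X_pow_mul_divStep_pow (hP : P.coeff 0 = 1) (S : R[X]) (m : ℕ) :
    S = P * ∑ k ∈ Finset.range m, C (((divStep P ^ k) S).coeff 0) * X ^ k +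
      X ^ m * (divStep P ^ m) S := by
  induction m with
  | zero => simp
  | succ m ih =>
    have h := eq_coeff_zero_mul_add_X_mul_divStep hP ((divStep P ^ m) S)
    rw [← Module.End.mul_apply, ← pow_succ'] at h
    rw [Finset.sum_range_succ]
    linear_combination ih + X ^ m * h

/-- The state of the division of `L` by `P` in increasing powers of `X` when the coefficients of `L`
up to index `j` have been read; its constant term is coefficient `j` of the quotient. -/
noncomputable def divState (P L : R[X]) : ℕ → R[X]
  | 0 => C (L.coeff 0)
  | j + 1 => divStep P (divState P L j) + C (L.coeff (j + 1))

theorem coeff_zero_divStep_pow_divState (hP : P.coeff 0 = 1) (Q : R[X]) (k j : ℕ) :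
    ((divStep P ^ k) (divState P (P * Q) j)).coeff 0 = ((divStep P ^ k) 1 * Q).coeff j := by
  have hC (k : ℕ) (a : R) : ((divStep P ^ k) (C a)).coeff 0 = a * ((divStep P ^ k) 1).coeff 0 := by
    rw [← mul_one (C a), ← smul_eq_C_mul, map_smul, coeff_smul, smul_eq_mul]
  induction j generalizing k with
  | zero => rw [divState, hC, mul_coeff_zero, hP, one_mul, mul_coeff_zero, mul_comm]
  | succ j ih =>
    have h := eq_coeff_zero_mul_add_X_mul_divStep hP ((divStep P ^ k) 1)
    rw [← Module.End.mul_apply, ← pow_succ'] at h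
    conv_rhs => rw [h, add_mul, mul_assoc, mul_assoc, coeff_add, coeff_C_mul, coeff_X_mul]
    rw [divState, map_add, ← Module.End.mul_apply, ← pow_succ, coeff_add, ih, hC]
    ring

/-- The counterpart of `divStep` on coefficient lists, the divisor being `ofCoeffs (1 :: p)`. -/
def divStepCoeffs (p : List ℤ) : List ℤ → List ℤ
  | [] => []
  | a :: l => addScaled (-a) p l

theorem ofCoeffs_divStepCoeffs (p l : List ℤ) :
    ofCoeffs (divStepCoeffs p l) = divStep (ofCoeffs (1 :: p)) (ofCoeffs l) := by
  cases l with
  | nil => simp [divStepCoeffs, ofCoeffs]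
  | cons a l =>
    have h : ofCoeffs (a :: l) - C ((ofCoeffs (a :: l)).coeff 0) * ofCoeffs (1 :: p) =
        ofCoeffs (addScaled (-a) p l) * X := by
      rw [ofCoeffs_addScaled, coeff_ofCoeffs]
      simp only [ofCoeffs, List.getD_cons_zero, C_1, C_neg]
      ring
    rw [divStep_apply, h, divStepCoeffs]
    ext i
    rw [coeff_divX, coeff_mul_X]

end LongDivision

section QuotientBounds

variable {L Q : ℤ[X]} {E : List ℤ} {N : ℤ} {e r : ℕ}

theorem natAbs_mul_natAbs_coeff_le {K : ℕ} {f : ℤ[X]} {g : List ℤ}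
    (hL : ∀ i, (L.coeff i).natAbs ≤ 1) (hQ : ∀ i, (Q.coeff i).natAbs ≤ K)
    (h : C N * X ^ e * f = ofCoeffs g * L - expand ℤ r (ofCoeffs E) * Q) (i : ℕ) :
    N.natAbs * (f.coeff i).natAbs ≤ coeffNorm g + coeffNorm E * K := by
  have hi : N * f.coeff i =
      (ofCoeffs g * L).coeff (i + e) - (expand ℤ r (ofCoeffs E) * Q).coeff (i + e) := by
    rw [← coeff_sub, ← h, mul_right_comm, coeff_mul_X_pow, coeff_C_mul]
  have hg := natAbs_coeff_expand_ofCoeffs_mul_le hL 1 g (i + e)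
  rw [expand_one, mul_one] at hg
  rw [← Int.natAbs_mul, hi]
  exact (Int.natAbs_sub_le _ _).trans
    (add_le_add hg (natAbs_coeff_expand_ofCoeffs_mul_le hQ r E _))

-- Apply the previous bound to the largest coefficient of `Q`.
theorem natAbs_coeff_le_of_dominant {M : List ℤ} (hL : ∀ i, (L.coeff i).natAbs ≤ 1)
    (hE : coeffNorm E < N.natAbs)
    (h : C N * X ^ e * Q = ofCoeffs M * L - expand ℤ r (ofCoeffs E) * Q) (i : ℕ) :
    (Q.coeff i).natAbs ≤ coeffNorm M / (N.natAbs - coeffNorm E) := by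
  obtain ⟨j, -, hj⟩ := (Finset.range (Q.natDegree + 1)).exists_max_image
    (fun i => (Q.coeff i).natAbs) ⟨0, by simp⟩
  have hmax (i : ℕ) : (Q.coeff i).natAbs ≤ (Q.coeff j).natAbs := by
    by_cases hi : i ≤ Q.natDegree
    · exact hj i (by simpa [Nat.lt_succ_iff] using hi)
    · simp [coeff_eq_zero_of_natDegree_lt (not_le.mp hi)]
  refine (hmax i).trans ((Nat.le_div_iff_mul_le (by lia)).2 ?_)
  have := natAbs_mul_natAbs_coeff_le hL hmax h j
  rw [mul_comm, Nat.sub_mul]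
  lia

/-- Bounds for the coefficients of `(divStep P ^ k) (ofCoeffs c) * Q`, where `k < m` and `P` is
`ofCoeffs (1 :: p)`. Here `t` is the norm of a list `g` with
`N X ^ e * ofCoeffs c * Q = ofCoeffs g * P * Q - E * Q`, where the coefficients of `E * Q` are
bounded by `u`, and `g'` is `g` without its first `e` entries. -/
def divBounds (p : List ℤ) (N : ℤ) (u : ℕ) : ℕ → List ℤ → List ℤ → ℕ → List ℕ
  | 0, _, _, _ => []
  | m + 1, c, g', t =>
    natStrict (fun t => (t + u) / N.natAbs :: divBounds p N u m (divStepCoeffs p c) g'.tail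
      (t - (g'.headD 0).natAbs + (g'.headD 0 - N * c.headD 0).natAbs)) t

theorem natAbs_coeff_divStep_pow_mul_le_divBounds {p : List ℤ} {K : ℕ}
    (hL : ∀ i, ((ofCoeffs (1 :: p) * Q).coeff i).natAbs ≤ 1)
    (hQ : ∀ i, (Q.coeff i).natAbs ≤ K) (hN : N ≠ 0) {m k : ℕ} (hk : k < m) (c g g' : List ℤ)
    (h : C N * X ^ g.length * (ofCoeffs c * Q) =
      ofCoeffs (g ++ g') * (ofCoeffs (1 :: p) * Q) - expand ℤ r (ofCoeffs E) * Q) (i : ℕ) :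
    (((divStep (ofCoeffs (1 :: p)) ^ k) (ofCoeffs c) * Q).coeff i).natAbs ≤
      (divBounds p N (coeffNorm E * K) m c g' (coeffNorm (g ++ g'))).getD k 0 := by
  induction m generalizing k c g g' with
  | zero => simp at hk
  | succ m ih =>
    rw [divBounds, natStrict_apply]
    cases k with
    | zero =>
      rw [pow_zero, Module.End.one_apply, List.getD_cons_zero,
        Nat.le_div_iff_mul_le (Int.natAbs_pos.2 hN), mul_comm]
      exact natAbs_mul_natAbs_coeff_le hL hQ h i
    | succ k =>
      have hstep : ofCoeffs c =
          C (c.headD 0) * ofCoeffs (1 :: p) + X * ofCoeffs (divStepCoeffs p c) := by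
        rw [ofCoeffs_divStepCoeffs]
        convert eq_coeff_zero_mul_add_X_mul_divStep _ (ofCoeffs c) using 4
        · cases c <;> simp [coeff_ofCoeffs]
        · simp [coeff_ofCoeffs]
      have hg : ofCoeffs ((g ++ [g'.headD 0 - N * c.headD 0]) ++ g'.tail) =
          ofCoeffs (g ++ g') - C N * X ^ g.length * C (c.headD 0) := by
        cases g' <;> simp only [ofCoeffs_append, ofCoeffs, List.headD_nil, List.headD_cons,
          List.tail_nil, List.tail_cons, map_sub, map_mul, map_zero, List.length_append,
          List.length_singleton, List.append_nil] <;> ring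
      have ht : coeffNorm (g ++ g') - (g'.headD 0).natAbs +
          (g'.headD 0 - N * c.headD 0).natAbs =
          coeffNorm ((g ++ [g'.headD 0 - N * c.headD 0]) ++ g'.tail) := by
        cases g' <;> simp [coeffNorm]
        lia
      rw [List.getD_cons_succ, ht, pow_succ, Module.End.mul_apply, ← ofCoeffs_divStepCoeffs]
      refine ih (Nat.lt_of_succ_lt_succ hk) _ _ _ ?_
      rw [hg, List.length_append, List.length_singleton, pow_succ]
      linear_combination h - C N * X ^ g.length * Q * hstep

/-- For `P = ofCoeffs (1 :: p)`, a list of `m` numbers whose entry `k` bounds the coefficients of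
`(divStep P ^ k) 1 * Q` whenever `P * Q` has coefficients in `{-1, 0, 1}`. The bounds come from an
approximate inverse of `P`: up to the scalar `N`, the cofactor of the Graeffe transform of order
`level`, in which the coefficient `N` of index `d` dominates. -/
def quotientBounds (p : List ℤ) (level d m : ℕ) : List ℕ :=
  let M := graeffeCofactor level (1 :: p)
  let F := graeffe^[level] (1 :: p)
  intStrict (fun N => natStrict (fun t => natStrict (fun u => natStrict (fun v =>
    divBounds p N v m [1] (M.drop (d * 2 ^ level)) t) (u * (t / (N.natAbs - u))))
    (coeffNorm (F.set d 0))) (coeffNorm M)) (F.getD d 0)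

/-- The coefficient of index `d` dominates in the Graeffe transform of order `level`. -/
def isDominant (p : List ℤ) (level d : ℕ) : Bool :=
  d * 2 ^ level ≤ (graeffeCofactor level (1 :: p)).length &&
    coeffNorm ((graeffe^[level] (1 :: p)).set d 0) < ((graeffe^[level] (1 :: p)).getD d 0).natAbs

theorem natAbs_coeff_divStep_pow_one_mul_le {p : List ℤ} {level d m k : ℕ}
    (hL : ∀ i, ((ofCoeffs (1 :: p) * Q).coeff i).natAbs ≤ 1) (hd : isDominant p level d)
    (hk : k < m) (i : ℕ) :
    (((divStep (ofCoeffs (1 :: p)) ^ k) 1 * Q).coeff i).natAbs ≤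
      (quotientBounds p level d m).getD k 0 := by
  simp only [isDominant, Bool.and_eq_true, decide_eq_true_eq] at hd
  set M := graeffeCofactor level (1 :: p) with hM
  set F := graeffe^[level] (1 :: p) with hF
  have hone : ofCoeffs [1] = 1 := by simp [ofCoeffs]
  have h : C (F.getD d 0) * X ^ (d * 2 ^ level) * Q =
      ofCoeffs M * (ofCoeffs (1 :: p) * Q) - expand ℤ (2 ^ level) (ofCoeffs (F.set d 0)) * Q := by
    have := ofCoeffs_graeffeCofactor_mul level (1 :: p)
    rw [← hM, ← hF, ofCoeffs_eq_monomial_add_set F d, map_add, map_mul, expand_C, map_pow,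
      expand_X, ← pow_mul', mul_comm] at this
    linear_combination -Q * this
  have hK := natAbs_coeff_le_of_dominant hL hd.2 h
  have hlen : (M.take (d * 2 ^ level)).length = d * 2 ^ level := List.length_take_of_le hd.1
  have key := natAbs_coeff_divStep_pow_mul_le_divBounds (r := 2 ^ level) (E := F.set d 0) hL hK
    (Int.natAbs_pos.1 (hd.2.pos)) hk [1] (M.take (d * 2 ^ level)) (M.drop (d * 2 ^ level))
    (by rw [hlen, List.take_append_drop, hone, one_mul, h]) i
  simpa only [hone, List.take_append_drop, quotientBounds, intStrict_apply, natStrict_apply]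
    using key

end QuotientBounds

section PackedDigits

theorem two_pow_mul_add_and {i x y : ℕ} (hx : x < 2 ^ i) (hy : y < 2 ^ i) (a b : ℕ) :
    (2 ^ i * a + x) &&& (2 ^ i * b + y) = 2 ^ i * (a &&& b) + (x &&& y) := by
  refine Nat.eq_of_testBit_eq fun j => ?_
  rw [Nat.testBit_and, Nat.testBit_two_pow_mul_add _ hx, Nat.testBit_two_pow_mul_add _ hy,
    Nat.testBit_two_pow_mul_add _ (Nat.and_lt_two_pow x hy)]
  split <;> simp

theorem sum_digit_lt {b m : ℕ} {d : ℕ → ℕ} (hd : ∀ k < m, d k < b) :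
    ∑ k ∈ Finset.range m, d k * b ^ k < b ^ m := by
  induction m with
  | zero => simp
  | succ m ih =>
    rw [Finset.sum_range_succ, pow_succ']
    have := ih fun k hk => hd k (Nat.lt_succ_of_lt hk)
    nlinarith [Nat.mul_le_mul_right (b ^ m) (hd m (Nat.lt_succ_self m))]

theorem sum_digit_and_sum_two_pow_eq_zero {t m : ℕ} {d : ℕ → ℕ} (hd : ∀ k < m, d k < 2 ^ t) :
    (∑ k ∈ Finset.range m, d k * (2 ^ (t + 1)) ^ k) &&&
      (∑ k ∈ Finset.range m, 2 ^ t * (2 ^ (t + 1)) ^ k) = 0 := by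
  have hlt : 2 ^ t < 2 ^ (t + 1) := Nat.pow_lt_pow_succ one_lt_two
  induction m with
  | zero => simp
  | succ m ih =>
    have hd' : ∀ k < m, d k < 2 ^ t := fun k hk => hd k (Nat.lt_succ_of_lt hk)
    have hx := sum_digit_lt fun k hk => (hd' k hk).trans hlt
    have hy := sum_digit_lt (m := m) (d := fun _ => 2 ^ t) fun _ _ => hlt
    rw [← pow_mul] at hx hy
    rw [Finset.sum_range_succ, Finset.sum_range_succ, add_comm, add_comm _ (2 ^ t * _),
      mul_comm (d m), mul_comm (2 ^ t), ← pow_mul, two_pow_mul_add_and hx hy, ih hd',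
      Nat.and_two_pow, Nat.testBit_lt_two_pow (hd m (Nat.lt_succ_self m))]
    simp

theorem mod_and_sum_two_pow_eq_zero {t m z : ℕ} {d : ℕ → ℤ}
    (hd : ∀ k < m, 0 ≤ d k ∧ d k < 2 ^ t)
    (hz : (z : ℤ) ≡ ∑ k ∈ Finset.range m, d k * (2 ^ (t + 1)) ^ k [ZMOD (2 ^ (t + 1)) ^ m]) :
    z % (2 ^ (t + 1)) ^ m &&& (∑ k ∈ Finset.range m, 2 ^ t * (2 ^ (t + 1)) ^ k) = 0 := by
  have hd' : ∀ k < m, (d k).toNat < 2 ^ t := fun k hk => by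
    have := hd k hk
    zify
    lia
  have hsum : ∑ k ∈ Finset.range m, d k * (2 ^ (t + 1)) ^ k =
      ((∑ k ∈ Finset.range m, (d k).toNat * (2 ^ (t + 1)) ^ k : ℕ) : ℤ) := by
    push_cast
    refine Finset.sum_congr rfl fun k hk => ?_
    rw [Int.toNat_of_nonneg (hd k (Finset.mem_range.1 hk)).1]
  have hlt : ∀ k < m, (d k).toNat < 2 ^ (t + 1) := fun k hk =>
    (hd' k hk).trans (Nat.pow_lt_pow_succ one_lt_two)
  rw [hsum] at hz
  have hz' : z ≡ _ [MOD (2 ^ (t + 1)) ^ m] := Int.natCast_modEq_iff.1 (by exact_mod_cast hz)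
  rw [hz', Nat.mod_eq_of_lt (sum_digit_lt hlt), sum_digit_and_sum_two_pow_eq_zero hd']

end PackedDigits

section LayeredSearch

/-- Binary search trees, used as finite sets of natural numbers. -/
inductive NatTree
  | nil
  | node (l : NatTree) (a : ℕ) (r : NatTree)

namespace NatTree

/-- Membership in a tree, whether or not the tree is ordered. -/
def Contains (a : ℕ) : NatTree → Prop
  | nil => False
  | node l b r => l.Contains a ∨ a = b ∨ r.Contains a

/-- Insertion into a binary search tree. -/
def insert (a : ℕ) : NatTree → NatTree
  | nil => node nil a nil
  | node l b r =>
    bif a.beq b then node l b r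
    else bif a.ble b then node (l.insert a) b r
    else node l b (r.insert a)

theorem contains_insert {a b : ℕ} {t : NatTree} :
    (t.insert a).Contains b ↔ b = a ∨ t.Contains b := by
  induction t with
  | nil => simp [insert, Contains]
  | node l c r ihl ihr =>
    rw [insert]
    cases h : a.beq c with
    | true =>
      have := Nat.eq_of_beq_eq_true h
      simp only [cond_true, Contains]
      lia
    | false => cases a.ble c <;> simp only [cond_true, cond_false, Contains, ihl, ihr] <;> tauto

/-- Inserts the elements of a list, evaluating each of them first. -/
def insertAll (l : List ℕ) (t : NatTree) : NatTree :=
  l.foldr (fun a t => natStrict (fun a => t.insert a) a) t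

theorem contains_insertAll {b : ℕ} {l : List ℕ} {t : NatTree} :
    (insertAll l t).Contains b ↔ b ∈ l ∨ t.Contains b := by
  induction l with
  | nil => simp [insertAll]
  | cons a l ih =>
    change (natStrict (fun a => (insertAll l t).insert a) a).Contains b ↔ _
    rw [natStrict_apply, contains_insert, ih, List.mem_cons, or_assoc]

variable (children : ℕ → List ℕ)

/-- Inserts the children of all the elements of a tree into a second tree. -/
def insertChildren : NatTree → NatTree → NatTree
  | nil, t => t
  | node l a r, t => r.insertChildren (insertAll (children a) (l.insertChildren t))

theorem contains_insertChildren {b : ℕ} {s t : NatTree} :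
    (s.insertChildren children t).Contains b ↔
      (∃ a, s.Contains a ∧ b ∈ children a) ∨ t.Contains b := by
  induction s generalizing t with
  | nil => simp [insertChildren, Contains]
  | node l a r ihl ihr =>
    simp only [insertChildren, ihr, contains_insertAll, ihl, Contains]
    grind

/-- Whether the breadth-first search starting from the elements of a tree ends within the given
number of layers. -/
def searchEnds : ℕ → NatTree → Bool
  | _, nil => true
  | 0, node _ _ _ => false
  | fuel + 1, t => searchEnds fuel (t.insertChildren children nil)

theorem searchEnds_eq_false {fuel : ℕ} {Inv : ℕ → ℕ → Prop}
    (hstep : ∀ j < fuel, ∀ a, Inv j a → ∃ b ∈ children a, Inv (j + 1) b) {t : NatTree} {a : ℕ}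
    (hat : t.Contains a) (ha : Inv 0 a) : t.searchEnds children fuel = false := by
  induction fuel generalizing Inv t a with
  | zero => cases t with
    | nil => exact hat.elim
    | node => rfl
  | succ fuel ih =>
    obtain ⟨b, hb, hInv⟩ := hstep 0 fuel.succ_pos a ha
    cases t with
    | nil => exact hat.elim
    | node =>
      exact ih (Inv := fun j => Inv (j + 1)) (fun j hj => hstep (j + 1) (Nat.succ_lt_succ hj))
        ((contains_insertChildren children).2 (Or.inl ⟨a, hat, hb⟩)) hInv

end NatTree

end LayeredSearch

section PackedDivision

/-- The base `2 ^ 12` in which the states of a division are packed into natural numbers. -/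
def base : ℕ := 4096

/-- The offset that makes the digits of a packed state nonnegative. -/
def halfBase : ℕ := 2048

/-- Data for the division by a polynomial `P` with states packed into natural numbers by evaluation
at `base`: the value of `P`, a modulus `base ^ m`, the inverse of the value for this modulus, bounds
for the next `m` coefficients of the quotient, packed into one number, and a mask for the highest
bit of each of `m` digits. -/
structure PackedDivision where
  value : ℕ
  modulus : ℕ
  inverse : ℕ
  bounds : ℕ
  mask : ℕ

namespace PackedDivision

/-- `f D`, arranged so that the kernel evaluates the fields of `D` first. -/
def strict {α : Sort*} (f : PackedDivision → α) (D : PackedDivision) : α :=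
  natStrict (fun value => natStrict (fun modulus => natStrict (fun inverse =>
    natStrict (fun bounds => natStrict (fun mask => f ⟨value, modulus, inverse, bounds, mask⟩)
      D.mask) D.bounds) D.inverse) D.modulus) D.value

@[simp]
theorem strict_apply {α : Sort*} (f : PackedDivision → α) (D : PackedDivision) :
    strict f D = f D := by
  simp only [strict, natStrict_apply]

variable (D : PackedDivision)

/-- The natural number `n` encodes the state `S`; the offset makes the last digit of `n` equal to
`S.coeff 0 + halfBase`. -/
def Encodes (n : ℕ) (S : ℤ[X]) : Prop :=
  (n : ℤ) = S.eval (base : ℤ) + halfBase * D.value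

/-- The counterpart of `divStep` on packed states. -/
def step (n : ℕ) : ℕ := (n + (base * halfBase - n % base) * D.value) / base

/-- Whether all the digits of `z` modulo `D.modulus` are less than `halfBase`. -/
def smallDigits (z : ℕ) : Bool := Nat.beq (z % D.modulus &&& D.mask) 0

/-- Whether the next coefficients of the quotient, if only zeros were read, are within their
bounds. Multiplication by the inverse modulo `base ^ m` unpacks these coefficients. -/
def isAlive (n : ℕ) : Bool :=
  D.smallDigits (n * D.inverse + (D.bounds + D.modulus - halfBase)) &&
    D.smallDigits (n * (D.modulus - D.inverse) + (D.bounds + halfBase))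

/-- The packed states that may follow `n` when a coefficient `1` or `-1` is read. -/
def children (n : ℕ) : List ℕ :=
  natStrict (fun s => [s + 1, s - 1].filter D.isAlive) (D.step n)

/-- The fields of `D` have the intended meaning, with `b k` as the bound for the coefficient that
lies `k` places ahead. -/
structure Valid (P : ℤ[X]) (m : ℕ) (b : ℕ → ℕ) : Prop where
  value_eq : (D.value : ℤ) = P.eval (base : ℤ)
  modulus_eq : D.modulus = base ^ m
  inverse_le : D.inverse ≤ D.modulus
  mul_inverse : D.value * D.inverse ≡ 1 [MOD D.modulus]
  bounds_eq : D.bounds = ∑ k ∈ Finset.range m, b k * base ^ k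
  mask_eq : D.mask = ∑ k ∈ Finset.range m, halfBase * base ^ k
  pos : 0 < m
  bound_lt : ∀ k < m, 4 * b k < base

variable {D} {P S : ℤ[X]} {m n : ℕ} {b : ℕ → ℕ}

theorem Valid.value_eq_one_add (hD : D.Valid P m b) (hP : P.coeff 0 = 1) :
    (D.value : ℤ) = 1 + base * P.divX.eval (base : ℤ) := by
  conv_lhs => rw [hD.value_eq, ← X_mul_divX_add P, hP]
  simp [add_comm]

theorem Valid.value_pos (hD : D.Valid P m b) (hP : P.coeff 0 = 1) : 0 < D.value := by
  refine Nat.pos_of_ne_zero fun h0 => ?_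
  have := hD.value_eq_one_add hP
  simp only [h0, base] at this
  lia

theorem Valid.eval_eq (hD : D.Valid P m b) (hP : P.coeff 0 = 1) (S : ℤ[X]) :
    S.eval (base : ℤ) = S.coeff 0 * D.value + base * (divStep P S).eval (base : ℤ) := by
  conv_lhs => rw [eq_coeff_zero_mul_add_X_mul_divStep hP S]
  simp [hD.value_eq]

theorem Encodes.mod_base (hD : D.Valid P m b) (hP : P.coeff 0 = 1)
    (hS : (S.coeff 0).natAbs < halfBase) (hn : D.Encodes n S) :
    ((n % base : ℕ) : ℤ) = S.coeff 0 + halfBase := by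
  have h : (n : ℤ) = (S.coeff 0 + halfBase) + base *
      ((divStep P S).eval (base : ℤ) + halfBase * P.divX.eval (base : ℤ) +
        S.coeff 0 * P.divX.eval (base : ℤ)) := by
    rw [hn, hD.eval_eq hP, hD.value_eq_one_add hP]
    ring
  rw [Int.natCast_mod, h, Int.add_mul_emod_self_left, Int.emod_eq_of_lt] <;>
    simp only [base, halfBase] at hS ⊢ <;> lia

theorem Encodes.step (hD : D.Valid P m b) (hP : P.coeff 0 = 1)
    (hS : (S.coeff 0).natAbs < halfBase) (hn : D.Encodes n S) :
    D.Encodes (D.step n) (divStep P S) ∧ 1 ≤ D.step n := by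
  have hle : base + n % base ≤ base * halfBase := by
    have := Nat.mod_lt n (show 0 < base by decide)
    simp only [base, halfBase] at this ⊢
    lia
  have hstep : (n + (base * halfBase - n % base) * D.value : ℕ) =
      (base : ℤ) * ((divStep P S).eval (base : ℤ) + halfBase * D.value) := by
    rw [Nat.cast_add, Nat.cast_mul, Nat.cast_sub (by lia), hn.mod_base hD hP hS, hn,
      hD.eval_eq hP]
    push_cast
    ring
  constructor
  · rw [Encodes, PackedDivision.step, Int.natCast_div, hstep,
      Int.mul_ediv_cancel_left _ (by decide)]
  · rw [PackedDivision.step, Nat.le_div_iff_mul_le (by decide), one_mul]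
    exact (Nat.le_sub_of_add_le hle).trans ((Nat.le_mul_of_pos_right _ (hD.value_pos hP)).trans
      (Nat.le_add_left _ _))

theorem Valid.smallDigits_eq_true (hD : D.Valid P m b) {z : ℕ} {d : ℕ → ℤ}
    (hd : ∀ k < m, 0 ≤ d k ∧ d k < halfBase)
    (hz : (z : ℤ) ≡ ∑ k ∈ Finset.range m, d k * base ^ k [ZMOD base ^ m]) :
    D.smallDigits z = true := by
  rw [smallDigits, hD.modulus_eq, hD.mask_eq, Nat.beq_eq]
  exact mod_and_sum_two_pow_eq_zero (t := 11) hd hz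

theorem Encodes.mul_inverse_modEq (hD : D.Valid P m b) (hP : P.coeff 0 = 1)
    (hn : D.Encodes n S) :
    (n : ℤ) * D.inverse ≡
      ∑ k ∈ Finset.range m, ((divStep P ^ k) S).coeff 0 * base ^ k + halfBase
      [ZMOD base ^ m] := by
  have hS : S.eval (base : ℤ) ≡
      D.value * ∑ k ∈ Finset.range m, ((divStep P ^ k) S).coeff 0 * base ^ k
      [ZMOD base ^ m] := by
    conv_lhs => rw [eq_mul_sum_add_X_pow_mul_divStep_pow hP S m]
    simp only [eval_add, eval_mul, eval_finsetSum, eval_C, eval_pow, eval_X, ← hD.value_eq]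
    exact Int.modEq_add_fac_self
  have hinv : (D.value * D.inverse : ℤ) ≡ 1 [ZMOD base ^ m] := by
    exact_mod_cast hD.modulus_eq ▸ Int.natCast_modEq_iff.2 hD.mul_inverse
  rw [hn]
  calc _ ≡ (D.value * ∑ k ∈ Finset.range m, ((divStep P ^ k) S).coeff 0 * base ^ k +
          halfBase * D.value) * D.inverse [ZMOD base ^ m] := (hS.add_right _).mul_right _
    _ = (D.value * D.inverse) *
          (∑ k ∈ Finset.range m, ((divStep P ^ k) S).coeff 0 * base ^ k + halfBase) := by ring
    _ ≡ _ [ZMOD base ^ m] := by simpa using hinv.mul_right _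

theorem Encodes.isAlive (hD : D.Valid P m b) (hP : P.coeff 0 = 1)
    (hb : ∀ k < m, (((divStep P ^ k) S).coeff 0).natAbs ≤ b k) (hn : D.Encodes n S) :
    D.isAlive n = true := by
  have hle : halfBase ≤ D.bounds + D.modulus := by
    rw [hD.modulus_eq]
    have := Nat.le_self_pow hD.pos.ne' base
    simp only [base, halfBase] at this ⊢
    lia
  have hmod : (D.modulus : ℤ) = base ^ m := by exact_mod_cast hD.modulus_eq
  have hlt (k : ℕ) (hk : k < m) : 2 * b k < halfBase := by
    have := hD.bound_lt k hk
    simp only [base, halfBase] at this ⊢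
    lia
  obtain ⟨c, hc⟩ := (hn.mul_inverse_modEq hD hP).dvd
  rw [PackedDivision.isAlive, Bool.and_eq_true]
  constructor
  · refine hD.smallDigits_eq_true (d := fun k => b k + ((divStep P ^ k) S).coeff 0)
      (fun k hk => by have := hlt k hk; have := hb k hk; lia) ?_
    rw [Nat.cast_add, Nat.cast_sub hle]
    push_cast [hmod, hD.bounds_eq, add_mul, Finset.sum_add_distrib]
    exact Int.modEq_iff_dvd.2 ⟨c - 1, by linear_combination hc⟩
  · refine hD.smallDigits_eq_true (d := fun k => b k - ((divStep P ^ k) S).coeff 0)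
      (fun k hk => by have := hlt k hk; have := hb k hk; lia) ?_
    push_cast [Nat.cast_sub hD.inverse_le, hmod, hD.bounds_eq, sub_mul, Finset.sum_sub_distrib]
    exact Int.modEq_iff_dvd.2 ⟨-c - n, by linear_combination -hc⟩

end PackedDivision

end PackedDivision

section LittlewoodPolynomials

variable {L : ℤ[X]}

theorem IsLittlewood.natAbs_coeff_le (hL : IsLittlewood L) (i : ℕ) : (L.coeff i).natAbs ≤ 1 := by
  by_cases hi : i ≤ L.natDegree
  · rcases hL i hi with h | h <;> rw [h] <;> decide
  · simp [coeff_eq_zero_of_natDegree_lt (not_le.mp hi)]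

theorem IsLittlewood.ne_zero (hL : IsLittlewood L) : L ≠ 0 := by
  rintro rfl
  simpa using hL 0 le_rfl

theorem IsLittlewood.neg (hL : IsLittlewood L) : IsLittlewood (-L) := fun i hi => by
  have := hL i (by simpa using hi)
  simp only [coeff_neg, Set.mem_insert_iff, Set.mem_singleton_iff] at this ⊢
  lia

theorem natDegree_one_add_X_pow_mul (hL : L ≠ 0) :
    ((1 + X ^ (L.natDegree + 1)) * L).natDegree = 2 * L.natDegree + 1 := by
  have hX : (1 + X ^ (L.natDegree + 1) : ℤ[X]).natDegree = L.natDegree + 1 := by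
    rw [add_comm, ← C_1, natDegree_X_pow_add_C]
  rw [natDegree_mul (ne_zero_of_natDegree_gt (n := 0) (by lia)) hL, hX]
  lia

theorem IsLittlewood.one_add_X_pow_mul (hL : IsLittlewood L) :
    IsLittlewood ((1 + X ^ (L.natDegree + 1)) * L) := fun i hi => by
  rw [natDegree_one_add_X_pow_mul hL.ne_zero] at hi
  rw [add_mul, one_mul, coeff_add, coeff_X_pow_mul']
  split
  · rw [coeff_eq_zero_of_natDegree_lt (by lia), zero_add]
    exact hL _ (by lia)
  · rw [add_zero]
    exact hL _ (by lia)

theorem IsLittlewood.exists_dvd_natDegree_ge (hL : IsLittlewood L) (n : ℕ) :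
    ∃ L', IsLittlewood L' ∧ L ∣ L' ∧ n ≤ L'.natDegree := by
  induction n with
  | zero => exact ⟨L, hL, dvd_rfl, Nat.zero_le _⟩
  | succ n ih =>
    obtain ⟨L', hL', hdvd, hn⟩ := ih
    refine ⟨_, hL'.one_add_X_pow_mul, hdvd.mul_left _, ?_⟩
    rw [natDegree_one_add_X_pow_mul hL'.ne_zero]
    lia

theorem IsLittlewood.reverse (hL : IsLittlewood L) : IsLittlewood L.reverse := fun i hi => by
  rw [coeff_reverse, revAt_le (hi.trans (reverse_natDegree_le L))]
  exact hL _ (Nat.sub_le _ _)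

/-- `P` divides some Littlewood polynomial. -/
def HasLittlewoodMultiple (P : ℤ[X]) : Prop := ∃ L, IsLittlewood L ∧ P ∣ L

variable {P : ℤ[X]}

theorem HasLittlewoodMultiple.reverse (h : HasLittlewoodMultiple P) :
    HasLittlewoodMultiple P.reverse := by
  obtain ⟨_, hL, Q, rfl⟩ := h
  exact ⟨_, hL.reverse, Q.reverse, reverse_mul_of_domain P Q⟩

theorem reverse_reverse_of_coeff_zero_ne_zero (hP : P.coeff 0 ≠ 0) : P.reverse.reverse = P := by
  ext i
  rw [coeff_reverse, coeff_reverse, reverse_natDegree, natTrailingDegree_eq_zero.2 (Or.inr hP),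
    Nat.sub_zero, revAt_invol]

theorem hasLittlewoodMultiple_reverse_iff (hP : P.coeff 0 ≠ 0) :
    HasLittlewoodMultiple P.reverse ↔ HasLittlewoodMultiple P :=
  ⟨fun h => reverse_reverse_of_coeff_zero_ne_zero hP ▸ h.reverse, .reverse⟩

theorem HasLittlewoodMultiple.exists_mul (h : HasLittlewoodMultiple P) (n : ℕ) :
    ∃ Q, IsLittlewood (P * Q) ∧ (P * Q).coeff 0 = 1 ∧ n ≤ (P * Q).natDegree := by
  obtain ⟨L, hL, hPL⟩ := h
  obtain ⟨L', hL', hLL', hn⟩ := hL.exists_dvd_natDegree_ge n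
  obtain ⟨Q, rfl⟩ := hPL.trans hLL'
  rcases hL' 0 (Nat.zero_le _) with h0 | h0
  · exact ⟨-Q, by simpa using hL'.neg, by rw [mul_neg, coeff_neg, h0, neg_neg], by simpa using hn⟩
  · exact ⟨Q, hL', h0, hn⟩

end LittlewoodPolynomials

section SearchCertificates

namespace PackedDivision

variable {D : PackedDivision} {P S : ℤ[X]} {m n : ℕ} {b : ℕ → ℕ}

theorem Encodes.exists_mem_children (hD : D.Valid P m b) (hP : P.coeff 0 = 1)
    (hS : (S.coeff 0).natAbs < halfBase) (hn : D.Encodes n S) {c : ℤ}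
    (hc : c ∈ ({-1, 1} : Set ℤ))
    (hb : ∀ k < m, (((divStep P ^ k) (divStep P S + C c)).coeff 0).natAbs ≤ b k) :
    ∃ n' ∈ D.children n, D.Encodes n' (divStep P S + C c) := by
  obtain ⟨hstep, hpos⟩ := hn.step hD hP hS
  have hencodes {n' : ℕ} (h : (n' : ℤ) = D.step n + c) : D.Encodes n' (divStep P S + C c) := by
    rw [Encodes, h, hstep, eval_add, eval_C]
    ring
  simp only [children, natStrict_apply, List.mem_filter, List.mem_cons, List.not_mem_nil, or_false]
  rcases hc with rfl | rfl
  · have h := hencodes (n' := D.step n - 1) (by lia)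
    exact ⟨_, ⟨Or.inr rfl, h.isAlive hD hP hb⟩, h⟩
  · have h := hencodes (n' := D.step n + 1) (by lia)
    exact ⟨_, ⟨Or.inl rfl, h.isAlive hD hP hb⟩, h⟩

theorem Valid.searchEnds_eq_false (hD : D.Valid P m b) (hP : P.coeff 0 = 1)
    (hb : ∀ Q, IsLittlewood (P * Q) → ∀ k < m, ∀ i,
      (((divStep P ^ k) 1 * Q).coeff i).natAbs ≤ b k)
    (h : HasLittlewoodMultiple P) (fuel : ℕ) :
    (NatTree.node .nil (1 + halfBase * D.value) .nil).searchEnds D.children fuel = false := by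
  obtain ⟨Q, hL, h0, hdeg⟩ := h.exists_mul fuel
  have hstate (j k : ℕ) (hk : k < m) :
      (((divStep P ^ k) (divState P (P * Q) j)).coeff 0).natAbs ≤ b k := by
    rw [coeff_zero_divStep_pow_divState hP]
    exact hb Q hL k hk j
  have hsmall (j : ℕ) : ((divState P (P * Q) j).coeff 0).natAbs < halfBase := by
    have := hstate j 0 hD.pos
    have := hD.bound_lt 0 hD.pos
    simp only [base, halfBase, pow_zero, Module.End.one_apply] at *
    lia
  refine NatTree.searchEnds_eq_false _ (Inv := fun j n => D.Encodes n (divState P (P * Q) j))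
    (fun j hj n hn => ?_) (Or.inr (Or.inl rfl)) (by simp [Encodes, divState, h0])
  exact hn.exists_mem_children hD hP (hsmall j) (hL _ (by lia)) (hstate (j + 1))

end PackedDivision

/-- The value at `b` of the polynomial with the given coefficients. -/
def evalCoeffs (b : ℤ) (l : List ℤ) : ℤ := l.foldr (fun a v => a + b * v) 0

theorem eval_ofCoeffs (b : ℤ) (l : List ℤ) : (ofCoeffs l).eval b = evalCoeffs b l := by
  induction l with
  | nil => simp [ofCoeffs, evalCoeffs]
  | cons a l ih => simp [ofCoeffs, ih, evalCoeffs]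

/-- The inverse of `a` modulo `modulus = base ^ m` for `m ≤ 32`, by Newton's iteration, which
doubles the number of correct digits in each of five steps. -/
def newtonInverse (a modulus : ℕ) : ℕ :=
  (fun x => x * (2 + modulus - a * x % modulus) % modulus)^[5] 1

theorem newtonInverse_le {modulus : ℕ} (h : 0 < modulus) (a : ℕ) :
    newtonInverse a modulus ≤ modulus := by
  rw [newtonInverse, Function.iterate_succ_apply']
  exact (Nat.mod_lt _ h).le

/-- The packed division by `ofCoeffs (1 :: p)`, looking `m` coefficients ahead, with the given
bounds for these. -/
def packedDivision (p : List ℤ) (bounds : List ℕ) (m : ℕ) : PackedDivision where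
  value := (evalCoeffs base (1 :: p)).toNat
  modulus := base ^ m
  inverse := newtonInverse (evalCoeffs base (1 :: p)).toNat (base ^ m)
  bounds := ∑ k ∈ Finset.range m, bounds.getD k 0 * base ^ k
  mask := ∑ k ∈ Finset.range m, halfBase * base ^ k

variable {p : List ℤ} {m : ℕ}

theorem valid_packedDivision {bounds : List ℕ} (hm : 0 < m)
    (hb : ∀ a ∈ bounds, 4 * a < base)
    (hinv : (packedDivision p bounds m).value * (packedDivision p bounds m).inverse %
      (packedDivision p bounds m).modulus = 1) :
    (packedDivision p bounds m).Valid (ofCoeffs (1 :: p)) m (bounds.getD · 0) where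
  value_eq := by
    rw [eval_ofCoeffs]
    refine Int.toNat_of_nonneg (not_lt.1 fun h => ?_)
    simp [packedDivision, Int.toNat_of_nonpos h.le] at hinv
  modulus_eq := rfl
  inverse_le := newtonInverse_le (Nat.pow_pos (by decide)) _
  mul_inverse := by
    rw [Nat.ModEq, hinv, Nat.mod_eq_of_lt]
    exact Nat.one_lt_pow hm.ne' (by decide)
  bounds_eq := rfl
  mask_eq := rfl
  pos := hm
  bound_lt k _ := by
    rw [List.getD_eq_getElem?_getD]
    rcases lt_or_ge k bounds.length with hk | hk
    · rw [List.getElem?_eq_getElem hk]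
      exact hb _ (List.getElem_mem hk)
    · rw [List.getElem?_eq_none hk]
      decide

/-- Checks that `ofCoeffs (1 :: p)` has no Littlewood multiple: the search for the quotient of such
a multiple, coefficient by coefficient, ends after at most `fuel` steps, when all states are
discarded for which one of the next `m` coefficients violates `quotientBounds p level d m`. -/
def searchCertificate (p : List ℤ) (level d m fuel : ℕ) : Bool :=
  isDominant p level d && Nat.blt 0 m &&
    (quotientBounds p level d m).all (fun a => Nat.blt (4 * a) base) &&
    PackedDivision.strict (fun D => Nat.beq (D.value * D.inverse % D.modulus) 1 &&
      natStrict (fun a => (NatTree.node .nil a .nil).searchEnds D.children fuel)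
        (1 + halfBase * D.value))
      (packedDivision p (quotientBounds p level d m) m)

theorem not_hasLittlewoodMultiple_of_searchCertificate {level d fuel : ℕ}
    (h : searchCertificate p level d m fuel) :
    ¬ HasLittlewoodMultiple (ofCoeffs (1 :: p)) := fun hP => by
  simp only [searchCertificate, Bool.and_eq_true, Nat.blt_eq, List.all_eq_true, Nat.beq_eq,
    PackedDivision.strict_apply, natStrict_apply] at h
  obtain ⟨⟨⟨hd, hm⟩, hb⟩, hinv, hsearch⟩ := h
  have := (valid_packedDivision hm hb hinv).searchEnds_eq_false (by simp [coeff_ofCoeffs])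
    (fun Q hQ k hk i => natAbs_coeff_divStep_pow_one_mul_le hQ.natAbs_coeff_le hd hk i) hP fuel
  exact Bool.noConfusion (hsearch.symm.trans this)

end SearchCertificates

section BitCodes

/-- The list of the `k` lowest bits of `n`, with `1` for a bit that is set and `z` for a bit that is
not. -/
def bitCoeffs (z : ℤ) (k n : ℕ) : List ℤ :=
  (List.range k).map fun i => if n.testBit i then 1 else z

theorem coeff_ofCoeffs_bitCoeffs (z : ℤ) (k n i : ℕ) :
    (ofCoeffs (bitCoeffs z k n)).coeff i = if i < k then if n.testBit i then 1 else z else 0 := by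
  rw [coeff_ofCoeffs, bitCoeffs, List.getD_eq_getElem?_getD, List.getElem?_map]
  split <;> simp_all

theorem isLittlewood_ofCoeffs_bitCoeffs {k : ℕ} (hk : 0 < k) (n : ℕ) :
    IsLittlewood (ofCoeffs (bitCoeffs (-1) k n)) := fun i hi => by
  have hdeg : (ofCoeffs (bitCoeffs (-1) k n)).natDegree ≤ k - 1 := by
    refine natDegree_le_iff_coeff_eq_zero.2 fun j hj => ?_
    rw [coeff_ofCoeffs_bitCoeffs, if_neg (by lia)]
  rw [coeff_ofCoeffs_bitCoeffs, if_pos (by lia)]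
  split <;> simp

/-- The polynomial of degree at most `d` with the bits of `n` as coefficients. -/
noncomputable def bitPoly (d n : ℕ) : ℤ[X] := ofCoeffs (bitCoeffs 0 (d + 1) n)

variable {d n : ℕ}

theorem coeff_bitPoly (d n i : ℕ) :
    (bitPoly d n).coeff i = if i ≤ d ∧ n.testBit i then 1 else 0 := by
  rw [bitPoly, coeff_ofCoeffs_bitCoeffs]
  grind

theorem bitPoly_injOn (d : ℕ) : Set.InjOn (bitPoly d) (Set.Iio (2 ^ (d + 1))) := fun m hm n hn h =>
  Nat.eq_of_testBit_eq fun i => by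
    rcases le_or_gt i d with hi | hi
    · have := congrArg (coeff · i) h
      simp only [coeff_bitPoly, hi, true_and] at this
      cases hmi : m.testBit i <;> cases hni : n.testBit i <;> simp_all
    · have hle : 2 ^ (d + 1) ≤ 2 ^ i := Nat.pow_le_pow_right two_pos hi
      rw [Nat.testBit_lt_two_pow (hm.trans_le hle), Nat.testBit_lt_two_pow (hn.trans_le hle)]

/-- The codes `n` for which `bitPoly d n` is a Newman polynomial of degree `d`. -/
def newmanCodes (d : ℕ) : Finset ℕ :=
  {n ∈ Finset.range (2 ^ (d + 1)) | n.testBit 0 ∧ n.testBit d}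

theorem natDegree_bitPoly (h : n ∈ newmanCodes d) : (bitPoly d n).natDegree = d := by
  refine natDegree_eq_of_le_of_coeff_ne_zero (natDegree_le_iff_coeff_eq_zero.2 fun i hi => ?_) ?_
  · rw [coeff_bitPoly, if_neg (by lia)]
  · simp_all [coeff_bitPoly, newmanCodes]

theorem isNewman_and_natDegree_eq_iff {P : ℤ[X]} :
    IsNewman P ∧ P.natDegree = d ↔ ∃ n ∈ newmanCodes d, bitPoly d n = P := by
  constructor
  · rintro ⟨⟨h01, h0⟩, rfl⟩
    have hlead : P.coeff P.natDegree = 1 := by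
      refine (h01 _).resolve_left fun h => ?_
      rw [leadingCoeff_eq_zero.1 h] at h0
      simp at h0
    refine ⟨Nat.ofBits fun i : Fin (P.natDegree + 1) => P.coeff i = 1, ?_, ?_⟩
    · simp [newmanCodes, Nat.ofBits_lt_two_pow, h0, hlead, -Nat.testBit_zero]
    · ext i
      rw [coeff_bitPoly]
      rcases le_or_gt i P.natDegree with hi | hi
      · rw [Nat.testBit_ofBits_lt _ _ (Nat.lt_succ_of_le hi)]
        have h : P.coeff i = 0 ∨ P.coeff i = 1 := h01 i
        rcases h with h | h <;> simp [h, hi]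
      · rw [coeff_eq_zero_of_natDegree_lt hi, if_neg (by lia)]
  · rintro ⟨n, hn, rfl⟩
    refine ⟨⟨fun i => ?_, ?_⟩, natDegree_bitPoly hn⟩
    · rw [coeff_bitPoly]
      split <;> simp
    · simp_all [coeff_bitPoly, newmanCodes]

/-- The number whose bits `0, …, d` are those of `n` in reverse order. -/
def reverseBits (d n : ℕ) : ℕ := Nat.ofBits fun i : Fin (d + 1) => n.testBit (d - i)

theorem reverse_bitPoly (h : n ∈ newmanCodes d) :
    (bitPoly d n).reverse = bitPoly d (reverseBits d n) := by
  ext i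
  rw [coeff_reverse, natDegree_bitPoly h, coeff_bitPoly, coeff_bitPoly]
  rcases le_or_gt i d with hi | hi
  · rw [revAt_le hi, reverseBits, Nat.testBit_ofBits_lt _ _ (Nat.lt_succ_of_le hi)]
    simp [hi]
  · rw [revAt_eq_self_of_lt hi, if_neg (by lia), if_neg (by lia)]

end BitCodes

section MultipleCertificates

/-- Checks that the long division of `ofCoeffs l` by `ofCoeffs (1 :: p)` leaves no remainder after
`n` steps. -/
def divides (p : List ℤ) (n : ℕ) (l : List ℤ) : Bool :=
  ((divStepCoeffs p)^[n] l).all (· == 0)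

theorem dvd_of_divides {p l : List ℤ} {n : ℕ} (h : divides p n l) :
    ofCoeffs (1 :: p) ∣ ofCoeffs l := by
  refine dvd_of_divStep_pow_eq_zero (n := n) (by simp [coeff_ofCoeffs]) ?_
  have hiter : ofCoeffs ((divStepCoeffs p)^[n] l) =
      (divStep (ofCoeffs (1 :: p)))^[n] (ofCoeffs l) :=
    Function.Semiconj.iterate_right (ofCoeffs_divStepCoeffs p) n l
  rw [Module.End.pow_apply, ← hiter]
  ext i
  rw [coeff_ofCoeffs, coeff_zero, List.getD_eq_getElem?_getD]
  simp only [divides, List.all_eq_true, beq_iff_eq] at h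
  cases hi : ((divStepCoeffs p)^[n] l)[i]? with
  | none => rfl
  | some a => exact h a (List.mem_of_getElem? hi)

end MultipleCertificates

section DegreeNine

theorem bitPoly_eq_ofCoeffs_cons_one (d : ℕ) {n : ℕ} (h : n.testBit 0) :
    bitPoly d n = ofCoeffs (1 :: (bitCoeffs 0 (d + 1) n).tail) := by
  rw [bitPoly, bitCoeffs, List.range_succ_eq_map, List.map_cons, if_pos h, List.tail_cons]

theorem hasLittlewoodMultiple_bitPoly_iff {d m n : ℕ} (hn : n ∈ newmanCodes d)
    (h : m = n ∨ m = reverseBits d n) :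
    HasLittlewoodMultiple (bitPoly d m) ↔ HasLittlewoodMultiple (bitPoly d n) := by
  rcases h with rfl | rfl
  · rfl
  · rw [← reverse_bitPoly hn, hasLittlewoodMultiple_reverse_iff]
    simp_all [coeff_bitPoly, newmanCodes]

/-- A code `n` for which a search shows that `bitPoly 9 n` has no Littlewood multiple, with the
parameters of its `quotientBounds`. -/
structure SearchData where
  code : ℕ
  level : ℕ
  index : ℕ

/-- Runs the search for at most `400` steps, looking `24` coefficients ahead. -/
def SearchData.check (s : SearchData) : Bool :=
  s.code.testBit 0 && searchCertificate (bitCoeffs 0 10 s.code).tail s.level s.index 24 400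

theorem SearchData.not_hasLittlewoodMultiple {s : SearchData} (h : s.check) :
    ¬ HasLittlewoodMultiple (bitPoly 9 s.code) := by
  rw [check, Bool.and_eq_true] at h
  rw [bitPoly_eq_ofCoeffs_cons_one 9 h.1]
  exact not_hasLittlewoodMultiple_of_searchCertificate h.2

/-- A code `n` with a Littlewood multiple of `bitPoly 9 n`. This multiple has `length` coefficients;
the coefficients `1` are the bits that are set in the number with digits `words` in base `2 ^ 256`,
least significant digit first. -/
structure MultipleData where
  code : ℕ
  length : ℕ
  words : List ℕ

/-- Checks that the encoded polynomial is a multiple of `bitPoly 9 s.code`. -/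
def MultipleData.check (s : MultipleData) : Bool :=
  s.code.testBit 0 && Nat.blt 0 s.length &&
    natStrict (fun x => divides (bitCoeffs 0 10 s.code).tail s.length (bitCoeffs (-1) s.length x))
      (Nat.ofDigits (2 ^ 256) s.words)

theorem MultipleData.hasLittlewoodMultiple {s : MultipleData} (h : s.check) :
    HasLittlewoodMultiple (bitPoly 9 s.code) := by
  rw [check, natStrict_apply, Bool.and_eq_true, Bool.and_eq_true, Nat.blt_eq] at h
  rw [bitPoly_eq_ofCoeffs_cons_one 9 h.1.1]
  exact ⟨_, isLittlewood_ofCoeffs_bitCoeffs h.1.2 _, dvd_of_divides h.2⟩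

/-- The codes of the elements of `badNewman9`. -/
def listedCodes : List ℕ := [583, 709, 721, 869, 937, 935, 815, 719, 829]

/-- The codes of the elements of `badNewman9` and their reciprocals. -/
def badCodes : List ℕ := listedCodes ++ listedCodes.map (reverseBits 9)

/-- Searches for the elements of `badNewman9`, some of them replaced by their reciprocals. -/
def searchData : List SearchData :=
  [⟨905, 6, 5⟩, ⟨653, 7, 3⟩, ⟨721, 6, 4⟩, ⟨869, 6, 4⟩, ⟨599, 6, 4⟩, ⟨919, 8, 4⟩, ⟨979, 6, 4⟩,
   ⟨719, 7, 5⟩, ⟨829, 6, 4⟩]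

/-- Littlewood multiples of the other Newman polynomials of degree nine, up to reciprocals. -/
def multipleData : List MultipleData :=
  [⟨513, 18, [0x201]⟩,
   ⟨515, 73, [0xa952d52c0902a0aa81]⟩,
   ⟨517, 465, [0x20a3e0a557415d04fc43fd017507f807f90aeb2b696929ad642d25eda9aded25,
    0xc739e611cf39ab39ce74cf196634ceb98511c798469943999372]⟩,
   ⟨519, 508, [0xf004c00e843b0c73007800c2d8d70ce21002d00739c21ce0007300e61866138f,
    0x8d066380331c402cc108c728c6f1984008430241b8463cc7086021c27086109]⟩,
   ⟨521, 21, [0x10401b]⟩,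
   ⟨523, 170, [0x2630263cc418c51977d68cdb929d9a3ad4cd0913b50]⟩,
   ⟨525, 252, [0x8603fa53949d282f6c4b4256b4b581fc00ea1a4812509497b42d2d485a7a012]⟩,
   ⟨527, 105, [0x11800da07f81405c407a011800f]⟩,
   ⟨529, 511, [0xffc80d9017817fa4f91fc81ec0d906f407c17ba67c17a41fc17893f01f703e0,
    0x787387863c50f7c73c3c71e1c3cf9e3c78c3cb5f18706bc21e1e10f685a9211]⟩,
   ⟨531, 168, [0x84017e0180b12e8197689927e817127e80f04d990c]⟩,
   ⟨533, 102, [0x2140f815c117415400a083e03f]⟩,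
   ⟨535, 73, [0x11802aa880bb83a449f]⟩,
   ⟨537, 420, [0x7f83d04a4bd348d0008d9b60e001380606036c019b0dc0c8413a448483420309,
    0x860fd2664600093203c1e00709bd1f22dc8d12380]⟩,
   ⟨539, 511, [0xf85fc1b305b832e10ba00cbd82750cd9a05e291be4c93a03b0b1540a0a905c0,
    0x52c1780f8003a8db122ea03b33604132801899720ca00c842883503ca06e66dc]⟩,
   ⟨541, 186, [0x2301d50162ec5c98951223c6c08c0ab2655c4cc0aa901b2]⟩,
   ⟨543, 510, [0x49f21ccb3360dc02f40eec1fe03c100363c813b76c4eb10604fb1b6259b03c00,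
    0x2581818919a5c980b0cd83f60cc1873642db9326c0706120cd99a0dc399040ad]⟩,
   ⟨547, 434, [0xb76ec555765638e9ca7e90358d7849c7bcb565e949d2d604a1ad48729e90bb8f,
    0x2db6d5b24da6d1b2ed36ed3649de4db748b65daa3aab2]⟩,
   ⟨549, 372, [0xfc1788700ad6929a5b00747b80ca0fd03e069405d0f80be9bd87501e003016af,
    0x8800496b443c0bf05c026a07d3502]⟩,
   ⟨551, 63, [0x4aa5b836c412df18]⟩,
   ⟨553, 510, [0xa2c2da57d1e90b03fcfe8de53e83e56c1fc0e81fd0fe6f4258bca5e28f09d0cc,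
    0x3366e60cf933765cc9813be3cecc9bb627ec8cdd32223661c3cf1638ebe3acaf]⟩,
   ⟨555, 381, [0x92ac1b00c166c41b02f81e0ade0d892a4435a03b08de82e87ed2a14c0a15aa63,
    0x1140b04ae8485f00804a4080c1392e4c]⟩,
   ⟨559, 252, [0xcf89044cab846c31458de6600ca0c22c7dc48b09162e4014a5c02aa2480ab0f]⟩,
   ⟨561, 40, [0x40008efffd]⟩,
   ⟨563, 511, [0x67241b6e81f449668b6e1461b3873bf830cb065d2c45e70e187172cf8eb030f3,
    0x2aaa8aa0292d495252a5ada942c2d7f4a1aaaadad2b4b69490a7a5a96a8a96d3]⟩,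
   ⟨565, 63, [0x460c808ad828084a]⟩,
   ⟨567, 30, [0x2301c1f8]⟩,
   ⟨569, 381, [0xe8060a20b03860f08c870001561d18108a3a680381886a13638e088ac2ce1609,
    0x1551501d2c07005c3438870780c2a8c8]⟩,
   ⟨571, 508, [0x874710d18f981872e90c22ca2a1501438820e1c61c3845928e90e8c90070603,
    0xab11a3e7973d2863d10a0e69e28398b5c34d3ea041d75ebd83921e40e8d6052]⟩,
   ⟨573, 434, [0x98c1346d81e19824c96224503025002186e0e40fa00ccd9441a034087c01daad,
    0x264221f27618203f41fb50de9edb720fe0d2181b9316e]⟩,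
   ⟨575, 465, [0x5558faf6f81601f04d41f6fe2ff17c02468f97cfe840f2ff5e817f9f43f40fc0,
    0xc697f417a72d298b61dd664b96c59927cdbb6dc9125d9bc4cb3e]⟩,
   ⟨579, 508, [0xd32384707182b9d718670ce06f457e01d60ee81fe21de03b83b90cf41fc87f80,
    0xa993a74ccb97342c9b276c9b8174ccb13744e99d264e59b7064999b72f0aacf]⟩,
   ⟨581, 510, [0x23575d7987301e0bd803e0ce61e307c07e01eb0be08e01f19f8074c7e27701f0,
    0x94a604ad2869cb2b43dab194b4ed2d6c4bd8c646866ccdc99ae6763366e77f0]⟩,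
   ⟨585, 12, [0x249]⟩,
   ⟨587, 73, [0x1264e64edc4a02802a9]⟩,
   ⟨589, 155, [0x4083e02e00280e83e0b40781f805c1fc07c02a0]⟩,
   ⟨591, 434, [0xfb0e306c5c080c619cef94b78f120f214e2fd9634ed08dbb5c810c0992dc020f,
    0x24813cc3b1de60dca01099de1b4a7013cca1ec0c00614]⟩,
   ⟨595, 465, [0x411192a84504455444833a56a042d22ad48aaa46146816a895b584590ab48c93,
    0x954a81414916956458e5563202ac291680511e8ca54aa09410e1]⟩,
   ⟨597, 105, [0x1222222a4df85c0d45f0500d47f]⟩,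
   ⟨601, 511, [0xb5cd9591f81d3727e2ecd9b91b2323b0ea6e26cdc481d93936a3606c7c5cc95d,
    0x35e98bc68f3d2850f4e7872b5b1c21f8c31d2c58b3e3ca96850c7e78f0d91b88]⟩,
   ⟨603, 126, [0x2481424acdb33703ecdb01b1205acdff]⟩,
   ⟨605, 508, [0x601e84457d001610f434558ab90f03c6002ba88aec0a00c1a57f0315721e0dc0,
    0x910fc2e87c140310201580a20f462b8040aa85d0f828030305d04001e148221]⟩,
   ⟨607, 511, [0x61efc56545d57047d13a4ff5df41f80e8c778242eec3d0fd57866159598a71df,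
    0x33776d489575766004bda959b565688855bd2c4ead933564ecadca9331ab7a97]⟩,
   ⟨611, 186, [0x2431810848630219cc39e8c218714e10618028001e3055e]⟩,
   ⟨613, 73, [0x1209e14c501a5405a10]⟩,
   ⟨615, 170, [0x2469d81c26c3bd0efc14b03216020d3004c2f21b607]⟩,
   ⟨619, 252, [0x92d284f0f8168230c120202214eb082d12c1e32a5105f1f61987b01f88b0d50]⟩,
   ⟨621, 42, [0x26448d9f920]⟩,
   ⟨623, 511, [0x6a92889022e882b2048ca016892052ac828ce5bac0c5acb091a8e16b0599230f,
    0x2aac4d80d1860c6d0600605c8d18147376c450a86c1b451b818c6e240e1a0862]⟩,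
   ⟨627, 30, [0x24104820]⟩,
   ⟨629, 248, [0x9013666cd8893326660d99b36224cc98132266cd8893326660d92206192221]⟩,
   ⟨631, 511, [0xc7c9e0ee2b0af3c21474298f13064a189a1c2e03d81a080f0ebe30418422e3c7,
    0x480180224281516187882c6c8784814e0c31fc1a1745c088740e60788f861857]⟩,
   ⟨633, 34, [0x2d9087c09]⟩,
   ⟨635, 14, [0x2633]⟩,
   ⟨637, 511, [0x9c415721e2817dd51e5f500f5fd4e8392bcb63efd6d6f9a0bf497b3a0ad2f8aa,
    0x2452327478ecccee888cbdeb9a0e74c6985cc891a2cb4d04bd207cc10c717bfc]⟩,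
   ⟨639, 372, [0x343a0243f07a16020110d0360f81f0191e058b83c020c060081407418e830180,
    0x94163f0f8183f0008161c08008bc0]⟩,
   ⟨643, 126, [0x450816d24652b0212b6a15b501003]⟩,
   ⟨645, 28, [0x4280001]⟩,
   ⟨647, 511, [0xa9b984f701ce07b09fb13e439c0fc0130867147e0ee8336c6e933206da036c9f,
    0x2a2a2d2ca4b0f2eb7a6f115494ca4bca3a9aab2566a2aaa20a9e4aaaa7a724b3]⟩,
   ⟨651, 155, [0x4302200644447c22f02f00ed107506f00393624]⟩,
   ⟨655, 508, [0x680b5a5e934284b5a5ad692fa9697c435a52d4821690a0a0a0852005680a82a1,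
    0x4929605a4bfb42ca12da02945694b0b43ca52c010c296b697bca82d752d2869]⟩,
   ⟨659, 63, [0x562e1267dc09c5e0]⟩,
   ⟨661, 511, [0x399b164044911d747c8d51d40fc3769fe0e83d85743f86b88f03783e23d05f17,
    0x432de6b9c61cf79ccb1da5b4f6384f9cc70ce5bce2db613cb712cb6b6f692155]⟩,
   ⟨663, 510, [0xc7a2861b003489240e444790e081e3010c00264a20c4323201109b4a410216c7,
    0x2b52010409b2058632d90c739c6a06d4a48c4e8414230db68b6c384ce44d8591]⟩,
   ⟨669, 170, [0x2928f63c0f1cd0ca0a424c9cf5a43da1c6c84b0d44d]⟩,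
   ⟨671, 84, [0xaeae3f11d0c2f49c66a07]⟩,
   ⟨675, 511, [0xe9fc1933cdbe65bb2ce7b865fb35c700c13e28d30c59c68cb278edb22cdb2110,
    0x2fa6722ee0af42f92fc0fa5791fa5aa0dec3f65b024a425a6e5a1b5217d57abc]⟩,
   ⟨679, 60, [0x818f710901607c0]⟩,
   ⟨683, 434, [0x92288885404408910025441290894095014a110a2150949540444a0a85228123,
    0x155551025510a0a084945444522545422424010520528]⟩,
   ⟨685, 508, [0x129c7410843a942a0862b8e3a9c7a1440180615863bdc203ce179d4228c20281,
    0x55863f8877c8239c603bcc2394f6b8ac300e0384823aca12caa184238403a84]⟩,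
   ⟨687, 511, [0xda88713584f516e4b6869a9a5b4e6f4988693caf05bce4b511a4f690dc7e92d0,
    0x5bb6ac81332898a7262afdb95265597324d9b5a27489b126cb93b7644d91b3a1]⟩,
   ⟨691, 508, [0x90161d39a3a6b0d30c90b06515a8f21e189243304296e166be0ca39c71edb633,
    0xa89919205f1b54508a372a49f4d6033cf7c7965d4de0e7127ca12b9c1941448]⟩,
   ⟨693, 30, [0x16a00001]⟩,
   ⟨695, 511, [0x5703435c084f26c50ef0071446d86027146c853628924a8f40d360c0a40ee578,
    0x544060cb996d8328969a052767d1d871e3740280ae21d138b623980199cb5064]⟩,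
   ⟨699, 381, [0x6cfc96c091b9242f254465b81a906c890bd0329a8ba2a26205b224a012b617db,
    0x1594953409fc168db707c4c2489a1772]⟩,
   ⟨701, 511, [0x5138e85c167c6cbdb4d6d8dad9797d2df4b086504b59372404b790fa6b0db92d,
    0x554631c719e28c2181515515965dd1fc711c555f555171460535553e71a4e73d]⟩,
   ⟨703, 434, [0x3d412d15a2cea1b01b45d2341f26f82c5235b765dd706834170698668bb2264c,
    0x2baebbcef92c288e6386fa0e6bceb2def34d48292da8b]⟩,
   ⟨707, 63, [0x504704e2062630f3]⟩,
   ⟨711, 170, [0x2860c0781e0d86f61961f94fe99902d14c06ba5f038]⟩,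
   ⟨715, 84, [0xa004e013940088ee7125b]⟩,
   ⟨717, 30, [0x108c6ed]⟩,
   ⟨723, 102, [0x283561bb1f16f16e8c0371286c]⟩,
   ⟨727, 381, [0x922416ca7a7b5864b0b416a6daa104815a14a16a501816db64080d24adb5ac7,
    0x958006902a2d61aab5312810595a849]⟩,
   ⟨731, 511, [0x52b33ef39a6b0c73bf631ce78c47b96659d61fe1966d1e62e0780fb2c05d06c3,
    0x7fb598f551dab53e452a6bad6274ad2b42a75e054a1ee7952429935a4eb17ad3]⟩,
   ⟨733, 63, [0x5029a3a80a9b03bf]⟩,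
   ⟨735, 248, [0xb6d000e00102d840300b41c2781e7e978096d2f04b4b94242812d69d0201e0]⟩,
   ⟨739, 84, [0xb2270703c80988e902010]⟩,
   ⟨743, 28, [0xb224400]⟩,
   ⟨747, 465, [0x4b4e3175b99e52a63cc9121ef9bed4e3274a5fa1c61ac21420e97b500528c263,
    0x164fd82d37e8ecff12b87e5b8785713785c15c7f06e064d780a1a]⟩,
   ⟨751, 42, [0x2821d0ad20f]⟩,
   ⟨759, 140, [0xa0e58699ce113961800c23ce12051ce1138]⟩,
   ⟨763, 510, [0xd68eb6e18ed9b33667bf41466cf5cb8b3247a06c4c38b7276ee9d71b32764ffc,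
    0x1580c8da942e7f9d0bd1d4d43f1e17c15142d1f85a96a507d0b2353d6b971d75]⟩,
   ⟨765, 24, [0x2fd]⟩,
   ⟨767, 465, [0x155c2ef831e1dc785c9c8fb3c5f1e47e0c0bc0c8f86e3e2f8700c18c383f0b87,
    0x913356ccd9bf37264c9c2b224240933665cd2b1f56c4d5d557d1]⟩,
   ⟨771, 16, [0x8181]⟩,
   ⟨775, 155, [0x422a2a8a7a0bfa07ec87f403e4178017001f007]⟩,
   ⟨779, 105, [0x19cf1a838d4281c15d143145783]⟩,
   ⟨783, 30, [0x21811a1f]⟩,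
   ⟨787, 511, [0xe6a64934e956d3a5b26e9a69b7dbaebaab1cfbf4b32dc8ee48ae0f581dc02ba0,
    0x7a53cf72ce2b4e31e21ef9573ae5bc618e6c8a3de68ce916b9c418a738cb5fae]⟩,
   ⟨791, 372, [0xa87703d4fd5370580043a22622b415d002465c0a1a95f54f814f435153814207,
    0xc62a7e054550744011503a429ea15]⟩,
   ⟨795, 434, [0x61c7388626e6149704fc3f80e93fa0db25f87649be83f48fa07893f4bf07d1fd,
    0x287546e38f38c35ce28d54facd440bbdf5a89c10ef18]⟩,
   ⟨799, 511, [0x66b40fa1780e609fb47902fa7da1f8bf889e03e37c8970c90679bf6d9302d1b2,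
    0x4eaf0c42d6bb7b52d4a7989671ad6c5ce1503588421a65ae4b9ed6dfa543fa74]⟩,
   ⟨807, 510, [0x690c7003c089198129120234c122101b66186d830b6c04909da3520908f5a07,
    0x33130f21b2d334c0200810970ec6e10d26cc6b7dcc0cc921930b020d025834cb]⟩,
   ⟨811, 508, [0x384e95d46fcd792ed08fc43005e03d20aa12c126c0db09c0e262dc74e3f84263,
    0xc8685b4fa9710b033c2b82ec0215bd2d846c132038497906f40e0303061ba18]⟩,
   ⟨819, 12, [0x999]⟩,
   ⟨823, 21, [0x132888]⟩,
   ⟨827, 511, [0xd353b568d5037437a9b25b23c0322d6fc9a279b5eb22da36c074df26e81fcae4,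
    0x61a3b0f28e71820834d1ee39ebaabcf1907cf3153861835c20e5a50ee0ccd754]⟩,
   ⟨831, 28, [0x9810fc0]⟩,
   ⟨839, 248, [0xc1c8289e6c1101cf0384680186c845704561ba427087b6163a7628b89b03b8]⟩,
   ⟨843, 34, [0x25c694289]⟩,
   ⟨847, 511, [0x9d56ae9f13f82a21dd67388be47b88e73b89c2792d887399ce3305faf728dc47,
    0x1cbd956262fe83dca936aadba756a8502e6edd49a915a64719a9768dad91d61c]⟩,
   ⟨855, 63, [0x6252488b49da5347]⟩,
   ⟨859, 511, [0x2eb74919e219a449b125cf09e2ec87f0849f48d818a9c8b897a7209943fcb8b0,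
    0x563862c7757a8b118bfee1aeb5af7fa9b4a38b6342b8e8ee71ac52dfb3a43bf]⟩,
   ⟨863, 126, [0x3040d80e45611f00814c09a5580ec0e0]⟩,
   ⟨871, 186, [0x24451556e398639672909899c4175504d73ce34c683c6e7]⟩,
   ⟨879, 420, [0x9899937326858b112018334806d0890661026cc920c4d8b30449bb466049b321,
    0xc183368d032066d8340cc184c80b066ccd306400]⟩,
   ⟨887, 510, [0xa97e55328bdc29cb39a3287acadc46894f05761c632cfe8e430a70973b627c0,
    0x96d6bd70533609bdd25836c5a5edf4ad2049d295f7b54b289e6ca483b4d87a4]⟩,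
   ⟨891, 60, [0x626ff59900022b5]⟩,
   ⟨895, 511, [0x87152bf05c1e07eae0389d17a0f13e8289e0388a81a8350e46a0f8163f817838,
    0x67ae63df708c5186118f50e239d71cea1de33cf3d4250f16241b66ed92afd949]⟩,
   ⟨903, 42, [0x30e00000001]⟩,
   ⟨911, 511, [0x7fa5a9ab2f4ad217d4b48dfa0f807e87f027c17c13c07c0be01a41d902c0bf0f,
    0x554143ba999ecc75315c4e623d1dce47779cc77731ce67b991dc473b9cf9abbd]⟩,
   ⟨927, 508, [0x4923fc37a34c0b19c06c92c1040ed02e36d27c6de8366fd6fc06c37e0204f81f,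
    0x8cdb404033e80593b63f87f83f05e0708fc09c0986600d9360481e4ce1b68d6]⟩,
   ⟨943, 510, [0x74f4b656b58816de82b6fb1881f99be13c0f84f13e21e09a57f4794f45ae2d40,
    0xcb6418e69905ef9b4ad6219de6a738e313ccea220aa6b21ae6f2181326491ef]⟩,
   ⟨951, 36, [0x252d4a87]⟩,
   ⟨959, 381, [0x8e7198f6b8c238ce38c0211c2300e310e238ac78c63998e638c631cf7b802881,
    0x11e761c4218e66398e318eab8e235473]⟩,
   ⟨975, 24, [0xbfe401]⟩,
   ⟨991, 63, [0x4220aa2bba09c57c]⟩,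
   ⟨1023, 10, [0x3ff]⟩]

theorem check_searchData : ∀ s ∈ searchData, s.check := by decide +kernel

theorem check_multipleData : ∀ s ∈ multipleData, s.check := by decide +kernel

theorem exists_searchData :
    ∀ n ∈ badCodes, ∃ s ∈ searchData, s.code = n ∨ s.code = reverseBits 9 n := by decide +kernel

theorem exists_multipleData : ∀ n ∈ newmanCodes 9, n ∉ badCodes →
    ∃ s ∈ multipleData, s.code = n ∨ s.code = reverseBits 9 n := by decide +kernel

theorem hasLittlewoodMultiple_bitPoly_nine_iff {n : ℕ} (hn : n ∈ newmanCodes 9) :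
    HasLittlewoodMultiple (bitPoly 9 n) ↔ n ∉ badCodes := by
  refine ⟨fun h hbad => ?_, fun hbad => ?_⟩
  · obtain ⟨s, hs, hcode⟩ := exists_searchData n hbad
    exact SearchData.not_hasLittlewoodMultiple (check_searchData s hs)
      ((hasLittlewoodMultiple_bitPoly_iff hn hcode).2 h)
  · obtain ⟨s, hs, hcode⟩ := exists_multipleData n hn hbad
    exact (hasLittlewoodMultiple_bitPoly_iff hn hcode).1
      (MultipleData.hasLittlewoodMultiple (check_multipleData s hs))

theorem badCodes_subset_newmanCodes : ∀ n ∈ badCodes, n ∈ newmanCodes 9 := by decide +kernel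

theorem badNewman9_eq : badNewman9 = listedCodes.map (bitPoly 9) := by
  simp only [badNewman9, listedCodes, List.map_cons, List.map_nil, List.cons.injEq, and_true]
  refine ⟨?_, ?_, ?_, ?_, ?_, ?_, ?_, ?_, ?_⟩ <;>
    simp [bitPoly, bitCoeffs, List.range_succ, ofCoeffs, Nat.testBit] <;> ring

theorem mem_badNewman9_or_eq_reverse_iff {P : ℤ[X]} :
    (P ∈ badNewman9 ∨ ∃ Q ∈ badNewman9, P = Q.reverse) ↔ ∃ n ∈ badCodes, bitPoly 9 n = P := by
  have hrev : ∀ n ∈ listedCodes, (bitPoly 9 n).reverse = bitPoly 9 (reverseBits 9 n) :=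
    fun n hn => reverse_bitPoly (badCodes_subset_newmanCodes n (List.mem_append_left _ hn))
  simp only [badNewman9_eq, badCodes, List.mem_append, List.mem_map, or_and_right, exists_or,
    exists_exists_and_eq_and]
  refine or_congr_right (exists_congr fun n => and_congr_right fun hn => ?_)
  rw [hrev n hn, eq_comm]

theorem isNewman_and_not_hasLittlewoodMultiple_iff {P : ℤ[X]} :
    IsNewman P ∧ P.natDegree = 9 ∧ ¬ HasLittlewoodMultiple P ↔
      ∃ n ∈ badCodes, bitPoly 9 n = P := by
  rw [← and_assoc, isNewman_and_natDegree_eq_iff]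
  constructor
  · rintro ⟨⟨n, hn, rfl⟩, hP⟩
    exact ⟨n, by_contra fun h => hP ((hasLittlewoodMultiple_bitPoly_nine_iff hn).2 h), rfl⟩
  · rintro ⟨n, hbad, rfl⟩
    have hn := badCodes_subset_newmanCodes n hbad
    exact ⟨⟨n, hn, rfl⟩, fun h => (hasLittlewoodMultiple_bitPoly_nine_iff hn).1 h hbad⟩

end DegreeNine

/-- A Newman polynomial of degree 9 divides no Littlewood polynomial iff it is
one of the nine listed polynomials or one of their reciprocals; in particular
there are exactly 18 such polynomials. -/
theorem newman_deg_nine_no_littlewood :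
    (∀ P : Polynomial ℤ, IsNewman P → P.natDegree = 9 →
      ((¬ ∃ L : Polynomial ℤ, IsLittlewood L ∧ P ∣ L) ↔
        (P ∈ badNewman9 ∨ ∃ Q ∈ badNewman9, P = Q.reverse))) ∧
    {P : Polynomial ℤ | IsNewman P ∧ P.natDegree = 9 ∧
      ¬ ∃ L : Polynomial ℤ, IsLittlewood L ∧ P ∣ L}.ncard = 18 := by
  constructor
  · intro P hP hdeg
    rw [mem_badNewman9_or_eq_reverse_iff, ← isNewman_and_not_hasLittlewoodMultiple_iff]
    exact ⟨fun h => ⟨hP, hdeg, h⟩, fun h => h.2.2⟩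
  · have himage : {P : ℤ[X] | IsNewman P ∧ P.natDegree = 9 ∧ ¬ HasLittlewoodMultiple P} =
        bitPoly 9 '' badCodes.toFinset := by
      ext P
      simpa using isNewman_and_not_hasLittlewoodMultiple_iff
    have hinj : Set.InjOn (bitPoly 9) badCodes.toFinset := (bitPoly_injOn 9).mono fun n hn =>
      Finset.mem_range.1 (Finset.mem_filter.1
        (badCodes_subset_newmanCodes n (List.mem_toFinset.1 hn))).1
    exact (congrArg Set.ncard himage).trans <| by
      rw [hinj.ncard_image, Set.ncard_coe_finset]
      decide
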